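/- Let α, β, γ, δ ∈ {0,1,…,5} with α, δ ∈ {0,5}. There exists a 5-L(2,1)-labelling L of the gadget G_5 with L(u) = α, L(a_u) = β, L(a_v) = γ, L(v) = δ if and only if the following conditions hold: if (α,δ) = (0,0) then (β,γ) ∈ {(2,5),(5,2),(3,5),(5,3)}; if (α,δ) = (5,5) then (β,γ) ∈ {(3,0),(0,3),(2,0),(0,2)}; if (α,δ) = (0,5) then (β,γ) = (4,1); if (α,δ) = (5,0) then (β,γ) = (1,4). -/

import Mathlib

/-!
In a `k`-L(2,1)-labelling an interior label excludes three labels from the neighbours of its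
vertex, so a vertex of degree at least `k - 1` is labelled `0` or `k`. In `G₅` this applies to `d`
and `f`, whose labels are different, hence `0` and `5` in some order; then `e₁` and `e₂` use up
`2` and `3`. The maps `ℓ ↦ 5 - ℓ` on labels and the reflection exchanging `u`-side and `v`-side
let us assume `L d = 0` and `L b_u < L b_v`. Then `L c ∈ {4, 5}`, and the square
`a_u, a_v, b_v, b_u` leaves three possibilities on the path `u a_u a_v v`. Their images under the
two symmetries are the ten admissible ones.
-/

/-- For an integer `k`, a `k`-L(2,1)-labelling of a graph `G` is a map from the vertices
to `{0,1,…,k}` such that labels of adjacent vertices differ by at least `2` and vertices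
at distance exactly `2` get distinct labels. -/
def IsL21Labelling {V : Type*} (G : SimpleGraph V) (k : ℕ) (L : V → ℕ) : Prop :=
  (∀ v, L v ≤ k) ∧
  (∀ x y, G.Adj x y → 2 ≤ |(L x : ℤ) - (L y : ℤ)|) ∧
  (∀ x y, G.dist x y = 2 → L x ≠ L y)

/-- The vertices of the gadget `G₅`. -/
inductive G5V | u | au | av | v | bu | bv | c | d | e1 | e2 | e3 | f | g1 | g2
deriving DecidableEq

open G5V in
/-- The gadget `G₅`. -/
def G5 : SimpleGraph G5V :=
  SimpleGraph.fromRel (fun x y => (x, y) ∈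
    [(u,au),(au,av),(av,v),(au,bu),(av,bv),(bu,c),(bv,c),(c,d),
     (d,e1),(d,e2),(d,e3),(e1,f),(e2,f),(f,g1),(f,g2)])

section General

variable {V W : Type*} {G : SimpleGraph V} {H : SimpleGraph W} {k : ℕ} {L : V → ℕ}

theorem isL21Labelling_iff_injOn_neighborSet :
    IsL21Labelling G k L ↔
      (∀ x, L x ≤ k) ∧
      (∀ x y, G.Adj x y → L x + 2 ≤ L y ∨ L y + 2 ≤ L x) ∧
      (∀ z, Set.InjOn L (G.neighborSet z)) := by
  have two_le_abs_sub_iff (a b : ℕ) : 2 ≤ |(a : ℤ) - b| ↔ a + 2 ≤ b ∨ b + 2 ≤ a := by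
    rw [le_abs]
    omega
  have dist_eq_two_iff (x y : V) :
      G.dist x y = 2 ↔ x ≠ y ∧ ¬ G.Adj x y ∧ ∃ z, G.Adj z x ∧ G.Adj z y := by
    rw [SimpleGraph.dist, ENat.toNat_eq_iff two_ne_zero, Nat.cast_ofNat,
      SimpleGraph.edist_eq_two_iff]
    simp only [Set.Nonempty, SimpleGraph.mem_commonNeighbors, G.adj_comm]
  simp only [IsL21Labelling, two_le_abs_sub_iff, dist_eq_two_iff]
  refine and_congr_right fun _ => and_congr_right fun hadj => ⟨fun hdist z x hx y hy hxy => ?_, ?_⟩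
  · by_contra hne
    by_cases h : G.Adj x y
    · have := hadj x y h
      omega
    · exact hdist x y ⟨hne, h, z, hx, hy⟩ hxy
  · rintro hinj x y ⟨hne, -, z, hx, hy⟩ hxy
    exact hne (hinj z hx hy hxy)

namespace IsL21Labelling

theorem add_two_le_or_add_two_le (hL : IsL21Labelling G k L) {x y : V} (h : G.Adj x y) :
    L x + 2 ≤ L y ∨ L y + 2 ≤ L x :=
  (isL21Labelling_iff_injOn_neighborSet.1 hL).2.1 x y h

theorem injOn_neighborSet (hL : IsL21Labelling G k L) (z : V) : Set.InjOn L (G.neighborSet z) :=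
  (isL21Labelling_iff_injOn_neighborSet.1 hL).2.2 z

theorem ne_of_adj_of_adj (hL : IsL21Labelling G k L) {x y : V} (z : V) (hx : G.Adj z x)
    (hy : G.Adj z y) (hxy : x ≠ y) : L x ≠ L y :=
  (hL.injOn_neighborSet z).ne hx hy hxy

theorem compl (hL : IsL21Labelling G k L) : IsL21Labelling G k (fun x => k - L x) := by
  refine isL21Labelling_iff_injOn_neighborSet.2
    ⟨fun x => Nat.sub_le k (L x), fun x y h => ?_, fun z x hx y hy hxy => ?_⟩
  · have := hL.add_two_le_or_add_two_le h
    have := hL.1 x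
    have := hL.1 y
    omega
  · exact hL.injOn_neighborSet z hx hy ((tsub_right_inj (hL.1 x) (hL.1 y)).1 hxy)

theorem comp_hom (hL : IsL21Labelling G k L) (φ : H →g G) (hφ : Function.Injective φ) :
    IsL21Labelling H k (L ∘ φ) :=
  isL21Labelling_iff_injOn_neighborSet.2
    ⟨fun x => hL.1 (φ x), fun _ _ h => hL.add_two_le_or_add_two_le (φ.map_adj h),
      fun z => (hL.injOn_neighborSet (φ z)).comp hφ.injOn fun _ h => φ.map_adj h⟩

theorem eq_zero_or_eq_of_le_degree_add_one (hL : IsL21Labelling G k L) {x : V}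
    [Fintype (G.neighborSet x)] (hx : k ≤ G.degree x + 1) : L x = 0 ∨ L x = k := by
  by_contra! hne
  have hle := hL.1 x
  have himage : (G.neighborFinset x).image L ⊆
      Finset.range (k + 1) \ Finset.Icc (L x - 1) (L x + 1) := by
    intro l hl
    obtain ⟨y, hy, rfl⟩ := Finset.mem_image.1 hl
    have hy' := hL.add_two_le_or_add_two_le ((G.mem_neighborFinset x y).1 hy)
    have := hL.1 y
    simp only [Finset.mem_sdiff, Finset.mem_range, Finset.mem_Icc]
    omega
  have hexcluded : Finset.Icc (L x - 1) (L x + 1) ⊆ Finset.range (k + 1) := by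
    intro l
    simp only [Finset.mem_Icc, Finset.mem_range]
    omega
  have hinj : Set.InjOn L (G.neighborFinset x) := by
    simpa only [SimpleGraph.coe_neighborFinset] using hL.injOn_neighborSet x
  have hcard := Finset.card_le_card himage
  rw [Finset.card_image_of_injOn hinj, SimpleGraph.card_neighborFinset_eq_degree,
    Finset.card_sdiff_of_subset hexcluded, Finset.card_range, Nat.card_Icc] at hcard
  omega

end IsL21Labelling

end General

namespace G5V

instance : Fintype G5V where
  elems := {u, au, av, v, bu, bv, c, d, e1, e2, e3, f, g1, g2}
  complete x := by cases x <;> decide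

instance : DecidableRel G5.Adj :=
  inferInstanceAs (DecidableRel (SimpleGraph.fromRel _).Adj)

/-- The symmetry of `G₅` exchanging `u, a_u, b_u` with `v, a_v, b_v`. -/
def reflect : G5 →g G5 where
  toFun
    | u => v | au => av | av => au | v => u | bu => bv | bv => bu
    | c => c | d => d | e1 => e1 | e2 => e2 | e3 => e3 | f => f | g1 => g1 | g2 => g2
  map_rel' {x y} := by revert x y; decide

theorem reflect_injective : Function.Injective reflect := by decide

/-- The labels along the path `u, a_u, a_v, v`. -/
def boundary (L : G5V → ℕ) : ℕ × ℕ × ℕ × ℕ := (L u, L au, L av, L v)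

/-- The effect on `boundary` of composing a labelling with `reflect`. -/
def reverseQuadruple : ℕ × ℕ × ℕ × ℕ → ℕ × ℕ × ℕ × ℕ
  | (p, q, r, s) => (s, r, q, p)

/-- The effect on `boundary` of replacing a labelling `L` by `5 - L`. The subtraction is truncated,
so this is an involution only on labels at most `5`. -/
def complQuadruple : ℕ × ℕ × ℕ × ℕ → ℕ × ℕ × ℕ × ℕ
  | (p, q, r, s) => (5 - p, 5 - q, 5 - r, 5 - s)

/-- The boundaries of the `5`-L(2,1)-labellings `L` of `G₅` with `L u, L v ∈ {0, 5}`, `L d = 0` and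
`L b_u < L b_v`. -/
def seedQuadruples : Finset (ℕ × ℕ × ℕ × ℕ) := {(5, 3, 0, 5), (0, 3, 5, 0), (0, 4, 1, 5)}

/-- The closure of `seedQuadruples` under reversal and complement: the boundaries of all
`5`-L(2,1)-labellings `L` of `G₅` with `L u, L v ∈ {0, 5}`. -/
def boundaryQuadruples : Finset (ℕ × ℕ × ℕ × ℕ) :=
  let reversalClosure := seedQuadruples ∪ seedQuadruples.image reverseQuadruple
  reversalClosure ∪ reversalClosure.image complQuadruple

theorem boundaryQuadruples_eq : boundaryQuadruples =
    {(0, 2, 5, 0), (0, 5, 2, 0), (0, 3, 5, 0), (0, 5, 3, 0),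
     (5, 3, 0, 5), (5, 0, 3, 5), (5, 2, 0, 5), (5, 0, 2, 5),
     (0, 4, 1, 5), (5, 1, 4, 0)} := by
  decide

theorem reverseQuadruple_mem_boundaryQuadruples :
    ∀ q ∈ boundaryQuadruples, reverseQuadruple q ∈ boundaryQuadruples := by
  decide

theorem complQuadruple_mem_boundaryQuadruples :
    ∀ q ∈ boundaryQuadruples, complQuadruple q ∈ boundaryQuadruples := by
  decide

section Necessity

variable {L : G5V → ℕ}

theorem label_d_eq_zero_or_five (hL : IsL21Labelling G5 5 L) : L d = 0 ∨ L d = 5 :=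
  hL.eq_zero_or_eq_of_le_degree_add_one (by decide)

theorem label_f_eq_zero_or_five (hL : IsL21Labelling G5 5 L) : L f = 0 ∨ L f = 5 :=
  hL.eq_zero_or_eq_of_le_degree_add_one (by decide)

theorem four_le_label_c (hL : IsL21Labelling G5 5 L) (hd : L d = 0) : 4 ≤ L c := by
  have hf : L f = 5 := by
    have := label_f_eq_zero_or_five hL
    have : L d ≠ L f := hL.ne_of_adj_of_adj e1 (by decide) (by decide) (by decide)
    omega
  have label_mem (x : G5V) (hx : G5.Adj d x ∧ G5.Adj f x) : L x = 2 ∨ L x = 3 := by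
    have := hL.1 x
    have := hL.add_two_le_or_add_two_le hx.1
    have := hL.add_two_le_or_add_two_le hx.2
    omega
  have he1 := label_mem e1 (by decide)
  have he2 := label_mem e2 (by decide)
  have he : L e1 ≠ L e2 := hL.ne_of_adj_of_adj d (by decide) (by decide) (by decide)
  have hce1 : L c ≠ L e1 := hL.ne_of_adj_of_adj d (by decide) (by decide) (by decide)
  have hce2 : L c ≠ L e2 := hL.ne_of_adj_of_adj d (by decide) (by decide) (by decide)
  have hcd := hL.add_two_le_or_add_two_le (show G5.Adj d c by decide)
  omega

theorem labels_b_c_of_lt (hL : IsL21Labelling G5 5 L) (hd : L d = 0) (hb : L bu < L bv) :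
    (L c = 4 ∧ L bu = 1 ∧ L bv = 2) ∨ (L c = 5 ∧ 1 ≤ L bu ∧ L bv ≤ 3) := by
  have hc := four_le_label_c hL hd
  have hc5 := hL.1 c
  have hbv5 := hL.1 bv
  have hbvc := hL.add_two_le_or_add_two_le (show G5.Adj bv c by decide)
  have hbud : L bu ≠ L d := hL.ne_of_adj_of_adj c (by decide) (by decide) (by decide)
  omega

theorem labels_au_av_of_lt (hL : IsL21Labelling G5 5 L) (hd : L d = 0) (hb : L bu < L bv) :
    (L au, L av) ∈ ({(3, 0), (3, 5), (4, 1), (4, 0), (5, 0)} : Set (ℕ × ℕ)) := by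
  have hbc := labels_b_c_of_lt hL hd hb
  have hau5 := hL.1 au
  have hav5 := hL.1 av
  have haa := hL.add_two_le_or_add_two_le (show G5.Adj au av by decide)
  have habu := hL.add_two_le_or_add_two_le (show G5.Adj au bu by decide)
  have habv := hL.add_two_le_or_add_two_le (show G5.Adj av bv by decide)
  have haubv : L au ≠ L bv := hL.ne_of_adj_of_adj av (by decide) (by decide) (by decide)
  have havbu : L av ≠ L bu := hL.ne_of_adj_of_adj au (by decide) (by decide) (by decide)
  have hauc : L au ≠ L c := hL.ne_of_adj_of_adj bu (by decide) (by decide) (by decide)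
  have havc : L av ≠ L c := hL.ne_of_adj_of_adj bv (by decide) (by decide) (by decide)
  simp only [Set.mem_insert_iff, Set.mem_singleton_iff, Prod.mk.injEq]
  omega

theorem boundary_mem_seedQuadruples (hL : IsL21Labelling G5 5 L) (hu : L u = 0 ∨ L u = 5)
    (hv : L v = 0 ∨ L v = 5) (hd : L d = 0) (hb : L bu < L bv) :
    boundary L ∈ seedQuadruples := by
  have ha := labels_au_av_of_lt hL hd hb
  have huau := hL.add_two_le_or_add_two_le (show G5.Adj u au by decide)
  have havv := hL.add_two_le_or_add_two_le (show G5.Adj av v by decide)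
  have huav : L u ≠ L av := hL.ne_of_adj_of_adj au (by decide) (by decide) (by decide)
  simp only [Set.mem_insert_iff, Set.mem_singleton_iff, Prod.mk.injEq] at ha
  simp only [boundary, seedQuadruples, Finset.mem_insert, Finset.mem_singleton, Prod.mk.injEq]
  omega

theorem boundary_mem_boundaryQuadruples (hL : IsL21Labelling G5 5 L) (hu : L u = 0 ∨ L u = 5)
    (hv : L v = 0 ∨ L v = 5) : boundary L ∈ boundaryQuadruples := by
  wlog hd : L d = 0 generalizing L
  · have hd5 := (label_d_eq_zero_or_five hL).resolve_left hd
    have hmem := this hL.compl (by omega) (by omega) (by omega)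
    have hcompl : complQuadruple (boundary fun x => 5 - L x) = boundary L := by
      simp only [boundary, complQuadruple, Nat.sub_sub_self (hL.1 _)]
    exact hcompl ▸ complQuadruple_mem_boundaryQuadruples _ hmem
  wlog hb : L bu < L bv generalizing L
  · have hne : L bu ≠ L bv := hL.ne_of_adj_of_adj c (by decide) (by decide) (by decide)
    have hlt : L bv < L bu := by omega
    exact reverseQuadruple_mem_boundaryQuadruples _
      (this (hL.comp_hom reflect reflect_injective) hv hu hd hlt)
  exact Finset.mem_union_left _
    (Finset.mem_union_left _ (boundary_mem_seedQuadruples hL hu hv hd hb))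

end Necessity

section Sufficiency

/-- The labelling with `boundary = (p, q, r, s)`, consecutive labels `b, b + 1` on `b_u, b_v`,
label `z` on `c`, and `0` on `d`. As `e₁, e₂` take `2, 3`, the labels `z` and `L e₃` have to be
`4` and `5` in some order. -/
def normalLabelling (p q r s b z : ℕ) : G5V → ℕ
  | u => p | au => q | av => r | v => s | bu => b | bv => b + 1 | c => z
  | d => 0 | e1 => 2 | e2 => 3 | e3 => 9 - z | f => 5 | g1 => 0 | g2 => 1

theorem isL21Labelling_normalLabelling {p q r s b z : ℕ}
    (h : (p, q, r, s, b, z) ∈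
      ({(5, 3, 0, 5, 1, 4), (0, 3, 5, 0, 1, 4), (0, 4, 1, 5, 2, 5)} :
        Finset (ℕ × ℕ × ℕ × ℕ × ℕ × ℕ))) :
    IsL21Labelling G5 5 (normalLabelling p q r s b z) := by
  simp only [Finset.mem_insert, Finset.mem_singleton, Prod.mk.injEq] at h
  rw [isL21Labelling_iff_injOn_neighborSet]
  obtain ⟨rfl, rfl, rfl, rfl, rfl, rfl⟩ | ⟨rfl, rfl, rfl, rfl, rfl, rfl⟩ |
    ⟨rfl, rfl, rfl, rfl, rfl, rfl⟩ := h <;>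
  · simp only [Set.InjOn, SimpleGraph.mem_neighborSet]
    decide +kernel

theorem exists_boundary_eq_of_mem_seedQuadruples {t : ℕ × ℕ × ℕ × ℕ} (ht : t ∈ seedQuadruples) :
    ∃ L, IsL21Labelling G5 5 L ∧ boundary L = t := by
  simp only [seedQuadruples, Finset.mem_insert, Finset.mem_singleton] at ht
  obtain rfl | rfl | rfl := ht
  · exact ⟨_, isL21Labelling_normalLabelling (b := 1) (z := 4) (by decide), rfl⟩
  · exact ⟨_, isL21Labelling_normalLabelling (b := 1) (z := 4) (by decide), rfl⟩
  · exact ⟨_, isL21Labelling_normalLabelling (b := 2) (z := 5) (by decide), rfl⟩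

theorem exists_boundary_eq_of_mem_boundaryQuadruples {t : ℕ × ℕ × ℕ × ℕ}
    (ht : t ∈ boundaryQuadruples) : ∃ L, IsL21Labelling G5 5 L ∧ boundary L = t := by
  have exists_reverse {t} : (∃ L, IsL21Labelling G5 5 L ∧ boundary L = t) →
      ∃ L, IsL21Labelling G5 5 L ∧ boundary L = reverseQuadruple t := by
    rintro ⟨L, hL, rfl⟩
    exact ⟨_, hL.comp_hom reflect reflect_injective, rfl⟩
  have exists_compl {t} : (∃ L, IsL21Labelling G5 5 L ∧ boundary L = t) →
      ∃ L, IsL21Labelling G5 5 L ∧ boundary L = complQuadruple t := by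
    rintro ⟨L, hL, rfl⟩
    exact ⟨_, hL.compl, rfl⟩
  revert t
  simp only [boundaryQuadruples, Finset.forall_mem_union, Finset.forall_mem_image]
  have hseed := @exists_boundary_eq_of_mem_seedQuadruples
  exact ⟨⟨fun _ h => hseed h, fun _ h => exists_reverse (hseed h)⟩,
    fun _ h => exists_compl (hseed h), fun _ h => exists_compl (exists_reverse (hseed h))⟩

end Sufficiency

theorem exists_isL21Labelling_iff_mem_boundaryQuadruples {p q r s : ℕ} (hp : p = 0 ∨ p = 5)
    (hs : s = 0 ∨ s = 5) :
    (∃ L, IsL21Labelling G5 5 L ∧ L u = p ∧ L au = q ∧ L av = r ∧ L v = s) ↔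
      (p, q, r, s) ∈ boundaryQuadruples := by
  constructor
  · rintro ⟨L, hL, rfl, rfl, rfl, rfl⟩
    exact boundary_mem_boundaryQuadruples hL hp hs
  · intro h
    simpa only [boundary, Prod.mk.injEq] using exists_boundary_eq_of_mem_boundaryQuadruples h

end G5V

/-- For `α, β, γ, δ ∈ {0,…,5}` with `α, δ ∈ {0,5}`, there is a `5`-L(2,1)-labelling `L`
of `G₅` with `L u = α`, `L a_u = β`, `L a_v = γ`, `L v = δ` if and only if:
if `(α,δ) = (0,0)` then `(β,γ) ∈ {(2,5),(5,2),(3,5),(5,3)}`;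
if `(α,δ) = (5,5)` then `(β,γ) ∈ {(3,0),(0,3),(2,0),(0,2)}`;
if `(α,δ) = (0,5)` then `(β,γ) = (4,1)`;
if `(α,δ) = (5,0)` then `(β,γ) = (1,4)`. -/
theorem stmt_8 (α β γ δ : ℕ) (hα : α = 0 ∨ α = 5) (hδ : δ = 0 ∨ δ = 5)
    (hβ : β ≤ 5) (hγ : γ ≤ 5) :
    (∃ L : G5V → ℕ, IsL21Labelling G5 5 L ∧
      L G5V.u = α ∧ L G5V.au = β ∧ L G5V.av = γ ∧ L G5V.v = δ) ↔
    ((α = 0 ∧ δ = 0 → (β, γ) ∈ ({(2,5),(5,2),(3,5),(5,3)} : Set (ℕ × ℕ))) ∧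
     (α = 5 ∧ δ = 5 → (β, γ) ∈ ({(3,0),(0,3),(2,0),(0,2)} : Set (ℕ × ℕ))) ∧
     (α = 0 ∧ δ = 5 → (β, γ) = (4,1)) ∧
     (α = 5 ∧ δ = 0 → (β, γ) = (1,4))) := by
  rw [G5V.exists_isL21Labelling_iff_mem_boundaryQuadruples hα hδ, G5V.boundaryQuadruples_eq]
  rcases hα with rfl | rfl <;> rcases hδ with rfl | rfl <;> simp
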